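/- arXiv:1905.08781 — 3 statements merged into one kernel-verified Lean document; each statement's English description precedes it below -/
import Mathlib

section
/- The pointwise limit hlow* := lim_{n→∞} hlow^n (which exists in [0,+∞] since the sequence is nondecreasing) is the minimal nonnegative solution of the lower hitting-time system: hlow* satisfies hlow* = 1_{A^c} + 1_{A^c}·(L hlow*), and every function g : X → [0,+∞] satisfying g = 1_{A^c} + 1_{A^c}·(L g) dominates hlow* pointwise. -/
open Filter Topology

variable {X : Type*}

/-- The application of a transition "matrix" `T` to an extended-real-valued
function `f`, `(Tf)(x) = ∑ y, T x y * f y`, with the convention `0 * ⊤ = 0`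
(which is the convention of `EReal` multiplication). -/
noncomputable def matApply [Fintype X] (T : X → X → ℝ) (f : X → EReal) (x : X) : EReal :=
  ∑ y, (T x y : EReal) * f y

/-- `T` is a transition matrix: nonnegative entries, rows summing to one. -/
def IsTransMat [Fintype X] (T : X → X → ℝ) : Prop :=
  (∀ x y, 0 ≤ T x y) ∧ ∀ x, ∑ y, T x y = 1

/-- `𝒯` has separately specified rows. -/
def HasSepRows [Fintype X] (𝒯 : Set (X → X → ℝ)) : Prop :=
  ∀ sel : X → X → X → ℝ, (∀ x, sel x ∈ 𝒯) → ∃ T ∈ 𝒯, ∀ x y, T x y = sel x x y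

/-- The lower transition operator of `𝒯`. -/
noncomputable def lowerOp [Fintype X] (𝒯 : Set (X → X → ℝ)) (f : X → EReal) (x : X) : EReal :=
  ⨅ T ∈ 𝒯, matApply T f x

/-- The upper transition operator of `𝒯`. -/
noncomputable def upperOp [Fintype X] (𝒯 : Set (X → X → ℝ)) (f : X → EReal) (x : X) : EReal :=
  ⨆ T ∈ 𝒯, matApply T f x

/-- The `{0,1}`-indicator of a set `B ⊆ X`, as an extended-real-valued function. -/
noncomputable def indE (B : Set X) : X → EReal := fun x => Set.indicator B 1 x

/-- The lower hitting-time iterates: `hlow⁰ = 1_{Aᶜ}`,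
`hlowⁿ⁺¹ = 1_{Aᶜ} + 1_{Aᶜ} · (L hlowⁿ)`. -/
noncomputable def hlowIter [Fintype X] (𝒯 : Set (X → X → ℝ)) (A : Set X) : ℕ → X → EReal
  | 0 => indE Aᶜ
  | n + 1 => fun x => indE Aᶜ x + indE Aᶜ x * lowerOp 𝒯 (hlowIter 𝒯 A n) x

/-- The upper hitting-time iterates: `hup⁰ = 1_{Aᶜ}`,
`hupⁿ⁺¹ = 1_{Aᶜ} + 1_{Aᶜ} · (U hupⁿ)`. -/
noncomputable def hupIter [Fintype X] (𝒯 : Set (X → X → ℝ)) (A : Set X) : ℕ → X → EReal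
  | 0 => indE Aᶜ
  | n + 1 => fun x => indE Aᶜ x + indE Aᶜ x * upperOp 𝒯 (hupIter 𝒯 A n) x
lemma matApply_nonneg' [Fintype X] {T : X → X → ℝ} (hT : IsTransMat T) {f : X → EReal}
    (hf : ∀ y, 0 ≤ f y) (x : X) : 0 ≤ matApply T f x :=
  Finset.sum_nonneg fun y _ => mul_nonneg (EReal.coe_nonneg.2 (hT.1 x y)) (hf y)

lemma matApply_mono' [Fintype X] {T : X → X → ℝ} (hT : IsTransMat T) {f g : X → EReal}
    (hf : ∀ y, f y ≤ g y) (x : X) : matApply T f x ≤ matApply T g x :=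
  Finset.sum_le_sum fun y _ => mul_le_mul_of_nonneg_left (hf y) (EReal.coe_nonneg.2 (hT.1 x y))

lemma lowerOp_nonneg' [Fintype X] {𝒯 : Set (X → X → ℝ)} (hmem : ∀ T ∈ 𝒯, IsTransMat T)
    {f : X → EReal} (hf : ∀ y, 0 ≤ f y) (x : X) : 0 ≤ lowerOp 𝒯 f x :=
  le_iInf₂ fun T hT => matApply_nonneg' (hmem T hT) hf x

lemma lowerOp_mono' [Fintype X] {𝒯 : Set (X → X → ℝ)} (hmem : ∀ T ∈ 𝒯, IsTransMat T)
    {f g : X → EReal} (hf : ∀ y, f y ≤ g y) (x : X) : lowerOp 𝒯 f x ≤ lowerOp 𝒯 g x :=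
  iInf₂_mono fun T hT => matApply_mono' (hmem T hT) hf x

lemma indE_nonneg' (B : Set X) (x : X) : 0 ≤ indE B x := by
  classical
  unfold indE
  by_cases h : x ∈ B <;> simp [h]

lemma matApply_coe' [Fintype X] (T : X → X → ℝ) (r : X → ℝ) (x : X) :
    matApply T (fun y => (r y : EReal)) x = ((∑ y, T x y * r y : ℝ) : EReal) := by
  unfold matApply
  classical
  induction (Finset.univ : Finset X) using Finset.induction_on with
  | empty => simp
  | insert i s hi ih => simp only [Finset.sum_insert hi, EReal.coe_add, EReal.coe_mul, ih]

lemma ereal_tendsto_sum' {ι : Type*} (s : Finset ι) (a : ℕ → ι → EReal) (b : ι → EReal)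
    (hb : ∀ i, 0 ≤ b i) (h : ∀ i, Tendsto (fun n => a n i) atTop (𝓝 (b i))) :
    Tendsto (fun n => ∑ i ∈ s, a n i) atTop (𝓝 (∑ i ∈ s, b i)) := by
  classical
  induction s using Finset.induction_on with
  | empty => simp
  | insert i s hi ih =>
    simp only [Finset.sum_insert hi]
    have h1 : b i ≠ ⊥ := (lt_of_lt_of_le EReal.bot_lt_zero (hb i)).ne'
    have h2 : ∑ i ∈ s, b i ≠ ⊥ :=
      (lt_of_lt_of_le EReal.bot_lt_zero (Finset.sum_nonneg fun i _ => hb i)).ne'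
    exact (EReal.continuousAt_add (p := (b i, ∑ i ∈ s, b i)) (Or.inr h2) (Or.inl h1)).tendsto.comp
      ((h i).prodMk_nhds ih)

lemma ereal_tendsto_mul' (t : ℝ) (a : ℕ → EReal) (b : EReal)
    (h : Tendsto a atTop (𝓝 b)) :
    Tendsto (fun n => (t : EReal) * a n) atTop (𝓝 (t * b)) := by
  by_cases ht : t = 0
  · simp [ht]
  · have ht' : (t : EReal) ≠ 0 := by exact_mod_cast ht
    exact (EReal.continuousAt_mul (p := ((t : EReal), b)) (Or.inl ht') (Or.inl ht')
      (Or.inl (EReal.coe_ne_bot t)) (Or.inl (EReal.coe_ne_top t))).tendsto.comp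
      (tendsto_const_nhds.prodMk_nhds h)

lemma isCompact_trans' [Fintype X] {𝒯 : Set (X → X → ℝ)} (hmem : ∀ T ∈ 𝒯, IsTransMat T)
    (hcl : IsClosed 𝒯) : IsCompact 𝒯 := by
  have hK : IsCompact (Set.pi Set.univ fun _ : X => Set.pi Set.univ fun _ : X =>
      Set.Icc (0 : ℝ) 1) :=
    isCompact_univ_pi fun _ => isCompact_univ_pi fun _ => isCompact_Icc
  refine hK.of_isClosed_subset hcl fun T hT x _ y _ => ?_
  obtain ⟨h0, h1⟩ := hmem T hT
  refine ⟨h0 x y, ?_⟩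
  rw [← h1 x]
  exact Finset.single_le_sum (fun z _ => h0 x z) (Finset.mem_univ y)

lemma lowerOp_iSup' [Fintype X] {𝒯 : Set (X → X → ℝ)} (hmem : ∀ T ∈ 𝒯, IsTransMat T)
    (hne : 𝒯.Nonempty) (hcl : IsClosed 𝒯) (r : ℕ → X → ℝ) (hr0 : ∀ n y, 0 ≤ r n y)
    (hmono : Monotone r) (x : X) :
    lowerOp 𝒯 (fun y => ⨆ n, (r n y : EReal)) x
      = ⨆ n, lowerOp 𝒯 (fun y => (r n y : EReal)) x := by
  apply le_antisymm
  · set c := ⨆ n, lowerOp 𝒯 (fun y => (r n y : EReal)) x with hc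
    have hcomp := isCompact_trans' hmem hcl
    have hcont : ∀ n, Continuous fun T : X → X → ℝ => matApply T (fun y => (r n y : EReal)) x := by
      intro n
      simp only [matApply_coe']
      exact continuous_coe_real_ereal.comp (by fun_prop)
    let K : ℕ → Set (X → X → ℝ) := fun n =>
      𝒯 ∩ {T | matApply T (fun y => (r n y : EReal)) x ≤ c}
    have hKcl : ∀ n, IsClosed (K n) := fun n =>
      hcl.inter (isClosed_le (hcont n) continuous_const)
    have hKne : ∀ n, (K n).Nonempty := by
      intro n
      obtain ⟨T, hT, hmin⟩ := hcomp.exists_isMinOn hne (hcont n).continuousOn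
      refine ⟨T, hT, ?_⟩
      have h1 : matApply T (fun y => (r n y : EReal)) x
          ≤ lowerOp 𝒯 (fun y => (r n y : EReal)) x := le_iInf₂ fun S hS => hmin hS
      refine le_trans h1 ?_
      exact le_iSup (fun n => lowerOp 𝒯 (fun y => (r n y : EReal)) x) n
    obtain ⟨T, hT⟩ := IsCompact.nonempty_iInter_of_sequence_nonempty_isCompact_isClosed K
      (fun n S hS => ⟨hS.1, le_trans (matApply_mono' (hmem S hS.1)
        (fun y => EReal.coe_le_coe_iff.2 (hmono (Nat.le_succ n) y)) x) hS.2⟩)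
      hKne (hcomp.of_isClosed_subset (hKcl 0) Set.inter_subset_left) hKcl
    rw [Set.mem_iInter] at hT
    have hT' := (hT 0).1
    refine le_trans (iInf₂_le T hT') ?_
    have hlim : Tendsto (fun n => matApply T (fun y => (r n y : EReal)) x) atTop
        (𝓝 (matApply T (fun y => ⨆ n, (r n y : EReal)) x)) := by
      refine ereal_tendsto_sum' _ _ _ (fun y => mul_nonneg
        (EReal.coe_nonneg.2 ((hmem T hT').1 x y)) ?_) fun y => ereal_tendsto_mul' _ _ _ ?_
      · exact le_trans (EReal.coe_nonneg.2 (hr0 0 y)) (le_iSup (fun n => (r n y : EReal)) 0)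
      · exact tendsto_atTop_iSup fun m n h => EReal.coe_le_coe_iff.2 (hmono h y)
    exact le_of_tendsto' hlim fun n => (hT n).2
  · exact iSup_le fun n => lowerOp_mono' hmem
      (fun y => le_iSup (fun n => (r n y : EReal)) n) x

lemma step_mono' [Fintype X] {𝒯 : Set (X → X → ℝ)} (hmem : ∀ T ∈ 𝒯, IsTransMat T) (B : Set X)
    {f g : X → EReal} (hf : ∀ y, f y ≤ g y) (x : X) :
    indE B x + indE B x * lowerOp 𝒯 f x ≤ indE B x + indE B x * lowerOp 𝒯 g x :=
  add_le_add le_rfl (mul_le_mul_of_nonneg_left (lowerOp_mono' hmem hf x) (indE_nonneg' B x))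

lemma ind_le_step' [Fintype X] {𝒯 : Set (X → X → ℝ)} (hmem : ∀ T ∈ 𝒯, IsTransMat T) (B : Set X)
    {f : X → EReal} (hf : ∀ y, 0 ≤ f y) (x : X) :
    indE B x ≤ indE B x + indE B x * lowerOp 𝒯 f x :=
  le_add_of_nonneg_right (mul_nonneg (indE_nonneg' B x) (lowerOp_nonneg' hmem hf x))

lemma hlow_real' [Fintype X] {𝒯 : Set (X → X → ℝ)} (hmem : ∀ T ∈ 𝒯, IsTransMat T)
    (hne : 𝒯.Nonempty) (A : Set X) (n : ℕ) :
    ∃ r : X → ℝ, (∀ y, 0 ≤ r y) ∧ hlowIter 𝒯 A n = fun y => (r y : EReal) := by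
  classical
  induction n with
  | zero =>
    refine ⟨Set.indicator Aᶜ 1, fun y => Set.indicator_nonneg (fun _ _ => zero_le_one) y, ?_⟩
    funext y
    by_cases h : y ∈ A <;> simp [hlowIter, indE, h]
  | succ n ih =>
    obtain ⟨r, hr, hE⟩ := ih
    obtain ⟨T, hT⟩ := hne
    have h0 : ∀ y, 0 ≤ lowerOp 𝒯 (hlowIter 𝒯 A n) y := fun y =>
      lowerOp_nonneg' hmem (fun y => by rw [hE]; exact EReal.coe_nonneg.2 (hr y)) y
    have h1 : ∀ y, lowerOp 𝒯 (hlowIter 𝒯 A n) y ≠ ⊤ := fun y => by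
      refine ne_top_of_le_ne_top (b := matApply T (hlowIter 𝒯 A n) y) ?_ (iInf₂_le T hT)
      rw [hE, matApply_coe']
      exact EReal.coe_ne_top _
    have h2 : ∀ y, ((lowerOp 𝒯 (hlowIter 𝒯 A n) y).toReal : EReal)
        = lowerOp 𝒯 (hlowIter 𝒯 A n) y := fun y =>
      EReal.coe_toReal (h1 y) (lt_of_lt_of_le EReal.bot_lt_zero (h0 y)).ne'
    refine ⟨fun y => if y ∈ A then 0 else 1 + (lowerOp 𝒯 (hlowIter 𝒯 A n) y).toReal, ?_, ?_⟩
    · intro y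
      have := EReal.toReal_nonneg (h0 y)
      dsimp only
      split_ifs <;> linarith
    · funext y
      by_cases h : y ∈ A <;> simp [hlowIter, indE, h, h2]

/-- The pointwise limit of the lower hitting-time iterates is the minimal nonnegative
solution of the lower hitting-time system. -/
theorem hlowStar_minimal_solution [Fintype X] [Nonempty X]
    (𝒯 : Set (X → X → ℝ))
    (hmem : ∀ T ∈ 𝒯, IsTransMat T) (hne : 𝒯.Nonempty) (hcl : IsClosed 𝒯)
    (hcv : Convex ℝ 𝒯) (hsep : HasSepRows 𝒯) (A : Set X) :
    ∃ hlowStar : X → EReal,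
      (∀ x, Tendsto (fun n => hlowIter 𝒯 A n x) atTop (𝓝 (hlowStar x))) ∧
      (∀ x, hlowStar x = indE Aᶜ x + indE Aᶜ x * lowerOp 𝒯 hlowStar x) ∧
      ∀ g : X → EReal, (∀ x, 0 ≤ g x) →
        (∀ x, g x = indE Aᶜ x + indE Aᶜ x * lowerOp 𝒯 g x) →
        ∀ x, hlowStar x ≤ g x := by
  classical
  choose r hr0 hrE using fun n => hlow_real' hmem hne A n
  have hnn : ∀ n y, 0 ≤ hlowIter 𝒯 A n y := fun n y => by
    rw [hrE]; exact EReal.coe_nonneg.2 (hr0 n y)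
  have hmono : Monotone (hlowIter 𝒯 A) := by
    refine monotone_nat_of_le_succ fun n => ?_
    induction n with
    | zero => exact fun x => ind_le_step' hmem Aᶜ (hnn 0) x
    | succ n ih => exact fun x => step_mono' hmem Aᶜ ih x
  have hrmono : Monotone r := fun m n h y => by
    have := hmono h y
    rw [hrE, hrE] at this
    exact EReal.coe_le_coe_iff.1 this
  have hlim : ∀ x, Tendsto (fun n => hlowIter 𝒯 A n x) atTop (𝓝 (⨆ n, hlowIter 𝒯 A n x)) :=
    fun x => tendsto_atTop_iSup fun m n h => hmono h x
  refine ⟨fun x => ⨆ n, hlowIter 𝒯 A n x, hlim, ?_, ?_⟩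
  · intro x
    have hL : lowerOp 𝒯 (fun y => ⨆ n, hlowIter 𝒯 A n y) x
        = ⨆ n, lowerOp 𝒯 (hlowIter 𝒯 A n) x := by
      simp only [hrE]
      exact lowerOp_iSup' hmem hne hcl r hr0 hrmono x
    refine tendsto_nhds_unique ((tendsto_add_atTop_iff_nat 1).2 (hlim x)) ?_
    by_cases h : x ∈ A
    · simp [hlowIter, indE, h]
    · have hi : indE Aᶜ x = 1 := by simp [indE, h]
      simp only [hlowIter, hi, one_mul]
      rw [hL]
      have h1 : Tendsto (fun n => lowerOp 𝒯 (hlowIter 𝒯 A n) x) atTop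
          (𝓝 (⨆ n, lowerOp 𝒯 (hlowIter 𝒯 A n) x)) :=
        tendsto_atTop_iSup fun m n h => lowerOp_mono' hmem (hmono h) x
      exact (EReal.continuousAt_add (p := ((1 : EReal), ⨆ n, lowerOp 𝒯 (hlowIter 𝒯 A n) x))
        (Or.inl (EReal.coe_ne_top 1)) (Or.inl (EReal.coe_ne_bot 1))).tendsto.comp
        (tendsto_const_nhds.prodMk_nhds h1)
  · intro g hg hgE x
    refine iSup_le fun n => ?_
    induction n generalizing x with
    | zero => rw [hgE x]; exact ind_le_step' hmem Aᶜ hg x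
    | succ n ih => rw [hgE x]; exact step_mono' hmem Aᶜ ih x
end

section
/- The pointwise limit hup* := lim_{n→∞} hup^n (which exists in [0,+∞] since the sequence is nondecreasing) is the minimal nonnegative solution of the upper hitting-time system: hup* satisfies hup* = 1_{A^c} + 1_{A^c}·(U hup*), and every function g : X → [0,+∞] satisfying g = 1_{A^c} + 1_{A^c}·(U g) dominates hup* pointwise. -/
open Filter Topology

variable {X : Type*}

theorem indE_mem_aux {A : Set X} {x : X} (h : x ∈ A) : indE Aᶜ x = 0 := by
  simp [indE, h]

theorem indE_not_mem_aux {A : Set X} {x : X} (h : x ∉ A) : indE Aᶜ x = 1 := by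
  simp [indE, h]

theorem matApply_mono_aux [Fintype X] {T : X → X → ℝ} (hT : IsTransMat T) {f g : X → EReal}
    (h : ∀ y, f y ≤ g y) (x : X) : matApply T f x ≤ matApply T g x :=
  Finset.sum_le_sum fun y _ =>
    mul_le_mul_of_nonneg_left (h y) (EReal.coe_nonneg.2 (hT.1 x y))

theorem matApply_nonneg_aux [Fintype X] {T : X → X → ℝ} (hT : IsTransMat T) {f : X → EReal}
    (h : ∀ y, 0 ≤ f y) (x : X) : 0 ≤ matApply T f x :=
  Finset.sum_nonneg fun y _ => mul_nonneg (EReal.coe_nonneg.2 (hT.1 x y)) (h y)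

theorem tendsto_sum_aux {ι : Type*} (s : Finset ι) (u : ι → ℕ → EReal) (l : ι → EReal)
    (hl : ∀ i, 0 ≤ l i) (h : ∀ i, Tendsto (u i) atTop (𝓝 (l i))) :
    Tendsto (fun n => ∑ i ∈ s, u i n) atTop (𝓝 (∑ i ∈ s, l i)) := by
  classical
  induction s using Finset.induction_on with
  | empty => simp
  | insert a s ha ih =>
    simp only [Finset.sum_insert ha]
    have h0 : (0 : EReal) ≤ ∑ i ∈ s, l i := Finset.sum_nonneg fun i _ => hl i
    have hc : ContinuousAt (fun p : EReal × EReal => p.1 + p.2) (l a, ∑ i ∈ s, l i) :=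
      EReal.continuousAt_add (Or.inr (EReal.bot_lt_zero.trans_le h0).ne')
        (Or.inl (EReal.bot_lt_zero.trans_le (hl a)).ne')
    exact hc.tendsto.comp ((h a).prodMk_nhds ih)

theorem tendsto_mul_aux (c : ℝ) (u : ℕ → EReal) (l : EReal)
    (h : Tendsto u atTop (𝓝 l)) :
    Tendsto (fun n => (c : EReal) * u n) atTop (𝓝 ((c : EReal) * l)) := by
  by_cases hc : c = 0
  · simp [hc]
  · have hk : ContinuousAt (fun p : EReal × EReal => p.1 * p.2) ((c : EReal), l) :=
      EReal.continuousAt_mul (Or.inl (by simpa using hc)) (Or.inl (by simpa using hc))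
        (Or.inl (by simp)) (Or.inl (by simp))
    exact hk.tendsto.comp (tendsto_const_nhds.prodMk_nhds h)

theorem upperOp_mono_aux [Fintype X] {𝒯 : Set (X → X → ℝ)} (hmem : ∀ T ∈ 𝒯, IsTransMat T)
    {f g : X → EReal} (h : ∀ y, f y ≤ g y) (x : X) : upperOp 𝒯 f x ≤ upperOp 𝒯 g x :=
  iSup₂_mono fun T hT => matApply_mono_aux (hmem T hT) h x

theorem upperOp_nonneg_aux [Fintype X] {𝒯 : Set (X → X → ℝ)} (hmem : ∀ T ∈ 𝒯, IsTransMat T)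
    (hne : 𝒯.Nonempty) {f : X → EReal} (h : ∀ y, 0 ≤ f y) (x : X) : 0 ≤ upperOp 𝒯 f x := by
  obtain ⟨T, hT⟩ := hne
  exact (matApply_nonneg_aux (hmem T hT) h x).trans (le_iSup₂_of_le T hT le_rfl)

theorem hup_nonneg_aux [Fintype X] {𝒯 : Set (X → X → ℝ)} (hmem : ∀ T ∈ 𝒯, IsTransMat T)
    (hne : 𝒯.Nonempty) (A : Set X) (n : ℕ) : ∀ x, 0 ≤ hupIter 𝒯 A n x := by
  induction n with
  | zero =>
    intro x
    by_cases h : x ∈ A <;> simp [hupIter, indE_mem_aux, indE_not_mem_aux, h]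
  | succ n ih =>
    intro x
    have := upperOp_nonneg_aux hmem hne ih x
    by_cases h : x ∈ A
    · simp [hupIter, indE_mem_aux h]
    · simp only [hupIter, indE_not_mem_aux h, one_mul]
      exact add_nonneg zero_le_one this

theorem hup_step_aux [Fintype X] {𝒯 : Set (X → X → ℝ)} (hmem : ∀ T ∈ 𝒯, IsTransMat T)
    (hne : 𝒯.Nonempty) (A : Set X) (n : ℕ) :
    ∀ x, hupIter 𝒯 A n x ≤ hupIter 𝒯 A (n + 1) x := by
  induction n with
  | zero =>
    intro x
    have := upperOp_nonneg_aux hmem hne (hup_nonneg_aux hmem hne A 0) x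
    by_cases h : x ∈ A
    · simp [hupIter, indE_mem_aux h]
    · change indE Aᶜ x ≤ indE Aᶜ x + indE Aᶜ x * upperOp 𝒯 (hupIter 𝒯 A 0) x
      rw [indE_not_mem_aux h, one_mul]
      exact le_add_of_nonneg_right this
  | succ n ih =>
    intro x
    have := upperOp_mono_aux hmem ih x
    by_cases h : x ∈ A
    · simp [hupIter, indE_mem_aux h]
    · change indE Aᶜ x + indE Aᶜ x * upperOp 𝒯 (hupIter 𝒯 A n) x ≤
        indE Aᶜ x + indE Aᶜ x * upperOp 𝒯 (hupIter 𝒯 A (n + 1)) x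
      rw [indE_not_mem_aux h, one_mul, one_mul]
      exact add_le_add le_rfl this

/-- The pointwise limit of the upper hitting-time iterates is the minimal nonnegative
solution of the upper hitting-time system. -/
theorem hupStar_minimal_solution [Fintype X] [Nonempty X]
    (𝒯 : Set (X → X → ℝ))
    (hmem : ∀ T ∈ 𝒯, IsTransMat T) (hne : 𝒯.Nonempty) (hcl : IsClosed 𝒯)
    (hcv : Convex ℝ 𝒯) (hsep : HasSepRows 𝒯) (A : Set X) :
    ∃ hupStar : X → EReal,
      (∀ x, Tendsto (fun n => hupIter 𝒯 A n x) atTop (𝓝 (hupStar x))) ∧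
      (∀ x, hupStar x = indE Aᶜ x + indE Aᶜ x * upperOp 𝒯 hupStar x) ∧
      ∀ g : X → EReal, (∀ x, 0 ≤ g x) →
        (∀ x, g x = indE Aᶜ x + indE Aᶜ x * upperOp 𝒯 g x) →
        ∀ x, hupStar x ≤ g x := by
  have hmono : ∀ x, Monotone (fun n => hupIter 𝒯 A n x) := fun x =>
    monotone_nat_of_le_succ fun n => hup_step_aux hmem hne A n x
  have hlim : ∀ x, Tendsto (fun n => hupIter 𝒯 A n x) atTop (𝓝 (⨆ n, hupIter 𝒯 A n x)) :=
    fun x => tendsto_atTop_iSup (hmono x)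
  have hle : ∀ n x, hupIter 𝒯 A n x ≤ ⨆ n, hupIter 𝒯 A n x :=
    fun n x => le_iSup (fun n => hupIter 𝒯 A n x) n
  have h0 : ∀ x, 0 ≤ ⨆ n, hupIter 𝒯 A n x :=
    fun x => (hup_nonneg_aux hmem hne A 0 x).trans (hle 0 x)
  refine ⟨fun x => ⨆ n, hupIter 𝒯 A n x, hlim, ?_, ?_⟩
  · intro x
    have hU : upperOp 𝒯 (fun x => ⨆ n, hupIter 𝒯 A n x) x
        = ⨆ n, upperOp 𝒯 (hupIter 𝒯 A n) x := by
      apply le_antisymm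
      · refine iSup₂_le fun T hT => ?_
        have ht : Tendsto (fun n => matApply T (hupIter 𝒯 A n) x) atTop
            (𝓝 (matApply T (fun x => ⨆ n, hupIter 𝒯 A n x) x)) :=
          tendsto_sum_aux Finset.univ (fun y n => (T x y : EReal) * hupIter 𝒯 A n y) _
            (fun y => mul_nonneg (EReal.coe_nonneg.2 ((hmem T hT).1 x y)) (h0 y))
            (fun y => tendsto_mul_aux _ _ _ (hlim y))
        refine le_of_tendsto' ht fun n => ?_
        refine le_trans ?_ (le_iSup _ n)
        exact le_iSup₂_of_le (f := fun T (_ : T ∈ 𝒯) => matApply T (hupIter 𝒯 A n) x) T hT le_rfl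
      · exact iSup_le fun n => upperOp_mono_aux hmem (hle n) x
    have hUlim : Tendsto (fun n => upperOp 𝒯 (hupIter 𝒯 A n) x) atTop
        (𝓝 (upperOp 𝒯 (fun x => ⨆ n, hupIter 𝒯 A n x) x)) := by
      rw [hU]
      exact tendsto_atTop_iSup fun m n hmn => upperOp_mono_aux hmem (fun y => hmono y hmn) x
    refine tendsto_nhds_unique ((tendsto_add_atTop_iff_nat 1).2 (hlim x)) ?_
    change Tendsto (fun n => indE Aᶜ x + indE Aᶜ x * upperOp 𝒯 (hupIter 𝒯 A n) x) atTop _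
    by_cases h : x ∈ A
    · simp [indE_mem_aux h]
    · simp only [indE_not_mem_aux h, one_mul]
      have hc : ContinuousAt (fun p : EReal × EReal => p.1 + p.2)
          (1, upperOp 𝒯 (fun x => ⨆ n, hupIter 𝒯 A n x) x) :=
        EReal.continuousAt_add (Or.inl (EReal.coe_ne_top 1)) (Or.inl (EReal.coe_ne_bot 1))
      exact hc.tendsto.comp (tendsto_const_nhds.prodMk_nhds hUlim)
  · intro g hg0 hg x
    refine iSup_le fun n => ?_
    induction n generalizing x with
    | zero =>
      have := upperOp_nonneg_aux hmem hne hg0 x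
      by_cases h : x ∈ A
      · simpa [hupIter, indE_mem_aux h] using hg0 x
      · rw [hg x]
        simp only [hupIter, indE_not_mem_aux h, one_mul]
        exact le_add_of_nonneg_right this
    | succ n ih =>
      have := upperOp_mono_aux hmem ih x
      by_cases h : x ∈ A
      · simpa [hupIter, indE_mem_aux h] using hg0 x
      · rw [hg x]
        simp only [hupIter, indE_not_mem_aux h, one_mul]
        exact add_le_add le_rfl this
end

section
/- The sequence (pup^n)_{n≥0} is pointwise nondecreasing with values in [0,1], so its pointwise limit pup* := lim_{n→∞} pup^n exists as a function X → [0,1]; moreover pup* is the minimal nonnegative solution of the upper hitting-probability system: pup* satisfies pup* = 1_A + 1_{A^c}·(U pup*), and every nonnegative function p : X → ℝ satisfying p = 1_A + 1_{A^c}·(U p) dominates pup* pointwise. -/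
open Filter Topology

variable {X : Type*}

/-- The `{0,1}`-indicator of a set `B ⊆ X`, as a real-valued function. -/
noncomputable def indR (B : Set X) : X → ℝ := fun x => Set.indicator B 1 x

/-- The restriction of the lower transition operator to real-valued functions
(on which it is real-valued). -/
noncomputable def lowerOpR [Fintype X] (𝒯 : Set (X → X → ℝ)) (f : X → ℝ) (x : X) : ℝ :=
  (lowerOp 𝒯 (fun y => (f y : EReal)) x).toReal

/-- The restriction of the upper transition operator to real-valued functions
(on which it is real-valued). -/
noncomputable def upperOpR [Fintype X] (𝒯 : Set (X → X → ℝ)) (f : X → ℝ) (x : X) : ℝ :=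
  (upperOp 𝒯 (fun y => (f y : EReal)) x).toReal

/-- The lower hitting-probability iterates: `plow⁰ = 1_A`,
`plowⁿ⁺¹ = 1_A + 1_{Aᶜ} · (L plowⁿ)`. -/
noncomputable def plowIter [Fintype X] (𝒯 : Set (X → X → ℝ)) (A : Set X) : ℕ → X → ℝ
  | 0 => indR A
  | n + 1 => fun x => indR A x + indR Aᶜ x * lowerOpR 𝒯 (plowIter 𝒯 A n) x

/-- The upper hitting-probability iterates: `pup⁰ = 1_A`,
`pupⁿ⁺¹ = 1_A + 1_{Aᶜ} · (U pupⁿ)`. -/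
noncomputable def pupIter [Fintype X] (𝒯 : Set (X → X → ℝ)) (A : Set X) : ℕ → X → ℝ
  | 0 => indR A
  | n + 1 => fun x => indR A x + indR Aᶜ x * upperOpR 𝒯 (pupIter 𝒯 A n) x

lemma aux_mat [Fintype X] (T : X → X → ℝ) (f : X → ℝ) (x : X) :
    matApply T (fun y => (f y : EReal)) x = ((∑ y, T x y * f y : ℝ) : EReal) := by
  classical
  unfold matApply
  have : ∀ s : Finset X, ∑ y ∈ s, (T x y : EReal) * (f y : EReal)
      = ((∑ y ∈ s, T x y * f y : ℝ) : EReal) := by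
    intro s
    induction s using Finset.induction_on with
    | empty => simp
    | insert a s ha ih =>
      rw [Finset.sum_insert ha, Finset.sum_insert ha, ih, EReal.coe_add, EReal.coe_mul]
  exact this _

lemma aux_bdd [Fintype X] {T : X → X → ℝ} (hT : IsTransMat T) (f : X → ℝ) (x : X) :
    ∑ y, T x y * f y ≤ ∑ y, |f y| := by
  refine Finset.sum_le_sum fun y _ => ?_
  have h1 : T x y ≤ 1 := by
    rw [← hT.2 x]
    exact Finset.single_le_sum (fun i _ => hT.1 x i) (Finset.mem_univ y)
  calc T x y * f y ≤ T x y * |f y| := mul_le_mul_of_nonneg_left (le_abs_self _) (hT.1 x y)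
    _ ≤ 1 * |f y| := mul_le_mul_of_nonneg_right h1 (abs_nonneg _)
    _ = |f y| := one_mul _

lemma aux_coe [Fintype X] {𝒯 : Set (X → X → ℝ)} (hmem : ∀ T ∈ 𝒯, IsTransMat T)
    (hne : 𝒯.Nonempty) (f : X → ℝ) (x : X) :
    ((upperOpR 𝒯 f x : ℝ) : EReal) = upperOp 𝒯 (fun y => (f y : EReal)) x := by
  obtain ⟨T, hT⟩ := hne
  apply EReal.coe_toReal
  · have : upperOp 𝒯 (fun y => (f y : EReal)) x ≤ ((∑ y, |f y| : ℝ) : EReal) := by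
      refine iSup₂_le fun T hT => ?_
      rw [aux_mat]
      exact EReal.coe_le_coe_iff.2 (aux_bdd (hmem T hT) f x)
    exact ne_top_of_le_ne_top (EReal.coe_ne_top _) this
  · have : ((∑ y, T x y * f y : ℝ) : EReal) ≤ upperOp 𝒯 (fun y => (f y : EReal)) x := by
      rw [← aux_mat]
      exact le_iSup₂ (f := fun T (_ : T ∈ 𝒯) => matApply T (fun y => (f y : EReal)) x) T hT
    exact ne_bot_of_le_ne_bot (EReal.coe_ne_bot _) this

lemma aux_le [Fintype X] {𝒯 : Set (X → X → ℝ)} (hmem : ∀ T ∈ 𝒯, IsTransMat T)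
    (hne : 𝒯.Nonempty) (f : X → ℝ) (x : X) (c : ℝ) :
    upperOpR 𝒯 f x ≤ c ↔ ∀ T ∈ 𝒯, ∑ y, T x y * f y ≤ c := by
  rw [← EReal.coe_le_coe_iff, aux_coe hmem hne]
  unfold upperOp
  simp only [iSup_le_iff, aux_mat, EReal.coe_le_coe_iff]

lemma aux_mono [Fintype X] {𝒯 : Set (X → X → ℝ)} (hmem : ∀ T ∈ 𝒯, IsTransMat T)
    (hne : 𝒯.Nonempty) {f g : X → ℝ} (h : ∀ x, f x ≤ g x) (x : X) :
    upperOpR 𝒯 f x ≤ upperOpR 𝒯 g x := by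
  rw [aux_le hmem hne]
  intro T hT
  refine le_trans (Finset.sum_le_sum fun y _ => ?_) ((aux_le hmem hne g x _).1 le_rfl T hT)
  exact mul_le_mul_of_nonneg_left (h y) ((hmem T hT).1 x y)

lemma aux_nonneg [Fintype X] {𝒯 : Set (X → X → ℝ)} (hmem : ∀ T ∈ 𝒯, IsTransMat T)
    (hne : 𝒯.Nonempty) {f : X → ℝ} (h : ∀ x, 0 ≤ f x) (x : X) :
    0 ≤ upperOpR 𝒯 f x := by
  obtain ⟨T, hT⟩ := id hne
  refine le_trans (Finset.sum_nonneg fun y _ => ?_) ((aux_le hmem hne f x _).1 le_rfl T hT)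
  exact mul_nonneg ((hmem T hT).1 x y) (h y)

lemma aux_step [Fintype X] {𝒯 : Set (X → X → ℝ)} (A : Set X) (f : X → ℝ) (x : X) :
    (x ∈ A ∧ indR A x = 1 ∧ indR A x + indR Aᶜ x * upperOpR 𝒯 f x = 1) ∨
    (x ∉ A ∧ indR A x = 0 ∧ indR A x + indR Aᶜ x * upperOpR 𝒯 f x = upperOpR 𝒯 f x) := by
  by_cases hx : x ∈ A
  · left; simp [indR, hx]
  · right; simp [indR, hx]

/-- The upper hitting-probability iterates are pointwise nondecreasing with values in
`[0,1]`, so converge pointwise; their limit is the minimal nonnegative solution of the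
upper hitting-probability system. -/
theorem pupStar_minimal_solution [Fintype X] [Nonempty X]
    (𝒯 : Set (X → X → ℝ))
    (hmem : ∀ T ∈ 𝒯, IsTransMat T) (hne : 𝒯.Nonempty) (hcl : IsClosed 𝒯)
    (hcv : Convex ℝ 𝒯) (hsep : HasSepRows 𝒯) (A : Set X) :
    (∀ x, Monotone fun n => pupIter 𝒯 A n x) ∧
    (∀ n x, pupIter 𝒯 A n x ∈ Set.Icc (0 : ℝ) 1) ∧
    ∃ pupStar : X → ℝ,
      (∀ x, Tendsto (fun n => pupIter 𝒯 A n x) atTop (𝓝 (pupStar x))) ∧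
      (∀ x, pupStar x ∈ Set.Icc (0 : ℝ) 1) ∧
      (∀ x, pupStar x = indR A x + indR Aᶜ x * upperOpR 𝒯 pupStar x) ∧
      ∀ p : X → ℝ, (∀ x, 0 ≤ p x) →
        (∀ x, p x = indR A x + indR Aᶜ x * upperOpR 𝒯 p x) →
        ∀ x, pupStar x ≤ p x := by
  have hind : ∀ x, 0 ≤ indR A x ∧ indR A x ≤ 1 := by
    intro x
    by_cases hx : x ∈ A <;> simp [indR, hx]
  have hIcc : ∀ n x, pupIter 𝒯 A n x ∈ Set.Icc (0 : ℝ) 1 := by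
    intro n
    induction n with
    | zero => exact fun x => hind x
    | succ n ih =>
      intro x
      rw [pupIter]; beta_reduce
      rcases aux_step (𝒯 := 𝒯) A (pupIter 𝒯 A n) x with ⟨_, _, h⟩ | ⟨_, _, h⟩
      · rw [h]; simp
      · rw [h]
        refine ⟨aux_nonneg hmem hne (fun y => (ih y).1) x, ?_⟩
        rw [aux_le hmem hne]
        intro T hT
        rw [← (hmem T hT).2 x]
        exact Finset.sum_le_sum fun y _ =>
          mul_le_of_le_one_right ((hmem T hT).1 x y) (ih y).2
  have hstepmono : ∀ f g : X → ℝ, (∀ x, f x ≤ g x) → ∀ x,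
      indR A x + indR Aᶜ x * upperOpR 𝒯 f x ≤ indR A x + indR Aᶜ x * upperOpR 𝒯 g x := by
    intro f g h x
    have h0 : 0 ≤ indR Aᶜ x := by
      by_cases hx : x ∈ A <;> simp [indR, hx]
    have := mul_le_mul_of_nonneg_left (aux_mono hmem hne h x) h0
    linarith
  have hsucc : ∀ n x, pupIter 𝒯 A n x ≤ pupIter 𝒯 A (n + 1) x := by
    intro n
    induction n with
    | zero =>
      intro x
      rcases aux_step (𝒯 := 𝒯) A (pupIter 𝒯 A 0) x with ⟨_, h', h⟩ | ⟨_, h', h⟩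
      · change indR A x ≤ _ + _ * _
        rw [h, h']
      · change indR A x ≤ _ + _ * _
        rw [h, h']
        exact aux_nonneg hmem hne (fun y => (hIcc 0 y).1) x
    | succ n ih => exact hstepmono _ _ ih
  have hmono : ∀ x, Monotone fun n => pupIter 𝒯 A n x :=
    fun x => monotone_nat_of_le_succ fun n => hsucc n x
  refine ⟨hmono, hIcc, fun x => ⨆ n, pupIter 𝒯 A n x, ?_⟩
  have hlim : ∀ x, Tendsto (fun n => pupIter 𝒯 A n x) atTop (𝓝 (⨆ n, pupIter 𝒯 A n x)) :=
    fun x => tendsto_atTop_ciSup (hmono x) ⟨1, by rintro _ ⟨n, rfl⟩; exact (hIcc n x).2⟩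
  generalize hq : (fun x => ⨆ n, pupIter 𝒯 A n x) = q
  have hlim' : ∀ x, Tendsto (fun n => pupIter 𝒯 A n x) atTop (𝓝 (q x)) := by
    subst hq; exact hlim
  have hle : ∀ n x, pupIter 𝒯 A n x ≤ q x := fun n x => (hmono x).ge_of_tendsto (hlim' x) n
  refine ⟨hlim', fun x => isClosed_Icc.mem_of_tendsto (hlim' x)
    (Eventually.of_forall fun n => hIcc n x), ?_, ?_⟩
  · intro x
    apply le_antisymm
    · refine le_of_tendsto (hlim' x) (Eventually.of_forall fun n => ?_)
      exact (hsucc n x).trans (hstepmono _ _ (hle n) x)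
    · rcases aux_step (𝒯 := 𝒯) A q x with ⟨_, h', h⟩ | ⟨hx, _, h⟩
      · rw [h, ← h']
        exact hle 0 x
      · rw [h, aux_le hmem hne]
        intro T hT
        refine le_of_tendsto (tendsto_finsetSum Finset.univ fun y _ =>
          (hlim' y).const_mul (T x y)) (Eventually.of_forall fun n => ?_)
        refine le_trans ((aux_le hmem hne (pupIter 𝒯 A n) x _).1 le_rfl T hT) ?_
        have h2 := hle (n + 1) x
        rw [pupIter] at h2; beta_reduce at h2
        rcases aux_step (𝒯 := 𝒯) A (pupIter 𝒯 A n) x with ⟨h3, _⟩ | ⟨_, _, h3⟩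
        · exact absurd h3 hx
        · rwa [h3] at h2
  · intro p hp0 hp x
    refine le_of_tendsto (hlim' x) (Eventually.of_forall fun n => ?_)
    revert x
    induction n with
    | zero =>
      intro x
      change indR A x ≤ _
      rcases aux_step (𝒯 := 𝒯) A p x with ⟨_, h', h⟩ | ⟨_, h', h⟩
      · rw [hp x, h, h']
      · rw [h']; exact hp0 x
    | succ n ih =>
      intro x
      rw [hp x]
      exact hstepmono _ _ ih x
end
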